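/- The generalized hypergeometric series ₃F₂(1/2, 1/2, 1/2; 3/2, 3/2; 1/4) equals (1/(2√3))·ψ′(1/3) − π²/(3√3), where ψ′(1/3) = 9·∑_{k≥0} 1/(3k+1)². Concretely, the sum over n ≥ 0 of ((1/2)ₙ)³ / (((3/2)ₙ)² · n!) · (1/4)ⁿ equals (9/(2√3))·∑_{k≥0} 1/(3k+1)² − π²/(3√3). -/

import Mathlib

open Real

/-- The Pochhammer symbol (shifted factorial) `(a)ₙ` for a real number `a`. -/
noncomputable def poch (a : ℝ) (n : ℕ) : ℝ := Polynomial.eval a (ascPochhammer ℝ n)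

lemma const_of_deriv (f : ℝ → ℝ) {a b : ℝ} (hab : a < b) (hc : ContinuousOn f (Set.Icc a b))
    (hd : ∀ x ∈ Set.Ioo a b, HasDerivAt f 0 x) : f b = f a := by
  obtain ⟨c, hc, h⟩ := exists_hasDerivAt_eq_slope f (fun _ => 0) hab hc hd
  have : b - a ≠ 0 := by linarith
  field_simp at h
  linarith

lemma series_deriv (c : ℕ → ℝ) (e : ℕ → ℕ) (hc : ∀ n, |c n| ≤ 1) (he : ∀ n, n ≤ e n)
    {x : ℝ} (hx : |x| < 1) :
    HasDerivAt (fun y : ℝ => ∑' n, c n * y ^ (e n + 1) / (e n + 1)) (∑' n, c n * x ^ (e n)) x := by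
  obtain ⟨r, hxr, hr1⟩ := exists_between hx
  have hr0 : 0 ≤ r := (abs_nonneg x).trans hxr.le
  have hu : Summable (fun n : ℕ => r ^ n) := summable_geometric_of_lt_one hr0 hr1
  refine hasDerivAt_tsum_of_isPreconnected (t := Set.Ioo (-r) r) (y₀ := 0)
    (g := fun n (y : ℝ) => c n * y ^ (e n + 1) / (e n + 1)) (g' := fun n (y : ℝ) => c n * y ^ (e n)) hu isOpen_Ioo
    isPreconnected_Ioo ?_ ?_ ?_ ?_ ?_
  · intro n y _
    have h := ((hasDerivAt_pow (e n + 1) y).const_mul (c n)).div_const ((e n : ℝ) + 1)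
    have h2 : (e n : ℝ) + 1 ≠ 0 := by positivity
    convert! h using 1
    push_cast
    field_simp
  · intro n y hy
    have hy' : |y| ≤ r := (abs_lt.2 hy).le
    rw [Real.norm_eq_abs, abs_mul, abs_pow]
    calc |c n| * |y| ^ e n ≤ 1 * r ^ e n := by gcongr; exact hc n
      _ = r ^ e n := one_mul _
      _ ≤ r ^ n := pow_le_pow_of_le_one hr0 hr1.le (he n)
  · constructor <;> linarith [abs_nonneg x]
  · simp
  · exact abs_lt.1 hxr

noncomputable def aa (n : ℕ) : ℝ := poch (1/2) n / n.factorial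

lemma poch_succ (a : ℝ) (n : ℕ) : poch a (n+1) = poch a n * (a + n) := by
  simp [poch, ascPochhammer_succ_eval]

lemma poch_zero (a : ℝ) : poch a 0 = 1 := by simp [poch]

lemma aa_bound (n : ℕ) : 0 ≤ aa n ∧ aa n ≤ 1 := by
  induction n with
  | zero => simp [aa, poch_zero]
  | succ n ih =>
    have : aa (n+1) = aa n * ((1/2 + n) / (n + 1)) := by
      simp only [aa, poch_succ, Nat.factorial_succ]
      have := Nat.factorial_pos n
      push_cast
      field_simp
    rw [this]
    constructor
    · have := ih.1
      positivity
    · refine mul_le_one₀ ih.2 (by positivity) ?_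
      rw [div_le_one (by positivity)]
      linarith

lemma poch_ratio (n : ℕ) : poch (3/2) n = poch (1/2) n * (2 * n + 1) := by
  induction n with
  | zero => simp [poch_zero]
  | succ n ih => rw [poch_succ, poch_succ, ih]; push_cast; ring

lemma poch_pos (n : ℕ) : 0 < poch (1/2) n := by
  induction n with
  | zero => simp [poch_zero]
  | succ n ih => rw [poch_succ]; positivity

lemma term_eq (n : ℕ) : (poch (1/2) n)^3 / ((poch (3/2) n)^2 * (n.factorial : ℝ)) * (1/4 : ℝ)^n
    = 2 * (aa n / (2 * n + 1) * (1/2) ^ (2 * n + 1) / (2 * n + 1)) := by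
  have := poch_pos n
  have := Nat.factorial_pos n
  rw [poch_ratio, aa, pow_succ (1/2 : ℝ), pow_mul]
  norm_num
  field_simp

lemma aa_hasSum {y : ℝ} (hy : |y| < 1) : HasSum (fun n => aa n * y ^ (2 * n)) (1 / √(1 - y^2)) := by
  have h := (Real.one_div_one_sub_rpow_hasFPowerSeriesOnBall_zero (1/2)).hasSum (y := y^2) (by
    simp
    rw [enorm_eq_nnnorm]
    have : ‖y‖₊ < 1 := by simpa [← NNReal.coe_lt_coe] using hy
    exact_mod_cast pow_lt_one₀ (by positivity) this (by norm_num))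
  simp only [zero_add, ← Real.sqrt_eq_rpow] at h
  convert! h using 2 with n
  have h1 := Ring.factorial_nsmul_multichoose_eq_ascPochhammer (1/2 : ℝ) n
  simp only [nsmul_eq_mul, Polynomial.ascPochhammer_smeval_eq_eval] at h1
  have h2 : aa n = Ring.choose (1/2 + (n:ℝ) - 1) n := by
    rw [Ring.choose, show (1/2 + (n:ℝ) - 1 - n + 1) = 1/2 by ring, aa, poch, ← h1]
    have := Nat.factorial_pos n
    field_simp
  rw [h2, FormalMultilinearSeries.ofScalars_apply_eq]
  simp only [smul_eq_mul]
  ring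

lemma arcsin_series {x : ℝ} (hx0 : 0 ≤ x) (hx : x < π / 2) :
    ∑' n, aa n * (sin x) ^ (2 * n + 1) / (2 * n + 1) = x := by
  rcases hx0.eq_or_lt with rfl | hx0
  · simp
  have key : ∀ y ∈ Set.Icc 0 x, HasDerivAt (fun y => ∑' n : ℕ, aa n * (sin y) ^ (2 * n + 1) / (2 * n + 1) - y) 0 y := by
    intro y hy
    have hc : 0 < cos y := cos_pos_of_mem_Ioo ⟨by linarith [hy.1, pi_pos], by linarith [hy.2]⟩
    have hs : |sin y| < 1 := by
      rw [← sq_lt_one_iff_abs_lt_one]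
      nlinarith [sin_sq_add_cos_sq y]
    have h := ((series_deriv aa (fun n => 2 * n) (fun n => abs_le.2 ⟨by linarith [(aa_bound n).1], (aa_bound n).2⟩)
      (fun n => by show n ≤ 2 * n; omega) hs).comp y (hasDerivAt_sin y)).sub (hasDerivAt_id y)
    rw [(aa_hasSum hs).tsum_eq, ← cos_sq', sqrt_sq hc.le] at h
    convert! h using 1
    · ext z; simp
    · field_simp; simp
  have := const_of_deriv _ hx0 (fun y hy => (key y hy).continuousAt.continuousWithinAt)
    (fun y hy => key y ⟨hy.1.le, hy.2.le⟩)
  simp at this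
  linarith

noncomputable def II (x : ℝ) : ℝ := ∫ u in (0:ℝ)..x, log (sin u)

lemma ii_log_sin (a b : ℝ) : IntervalIntegrable (fun u => log (sin u)) MeasureTheory.volume a b :=
  intervalIntegrable_log_sin

lemma II_cont : Continuous II := intervalIntegral.continuous_primitive ii_log_sin 0

lemma II_deriv {x : ℝ} (h0 : 0 < x) (h1 : x < π) : HasDerivAt II (log (sin x)) x := by
  have hs := sin_pos_of_pos_of_lt_pi h0 h1
  refine intervalIntegral.integral_hasDerivAt_right (ii_log_sin 0 x) ?_ ?_
  · exact (Measurable.stronglyMeasurable (by fun_prop)).stronglyMeasurableAtFilter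
  · exact (continuous_sin.continuousAt).log hs.ne'

lemma II_zero : II 0 = 0 := by simp [II]

lemma II_dup : 3 / 2 * II (π/3) = II (π/6) - π / 3 * log 2 := by
  have h1 : ∫ x in (0:ℝ)..(π/6), log (sin (2 * x)) = (1/2) * II (π/3) := by
    rw [intervalIntegral.integral_comp_mul_left (fun x => log (sin x)) two_ne_zero, II]
    rw [show 2 * (π / 6) = π / 3 by ring]
    simp
  have h2 : ∫ x in (0:ℝ)..(π/6), log (cos x) = -log 2 * π / 2 - II (π/3) := by
    rw [← integral_log_sin_zero_pi_div_two, II,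
      intervalIntegral.integral_interval_sub_left (ii_log_sin _ _) (ii_log_sin _ _)]
    have := intervalIntegral.integral_comp_sub_left (a := 0) (b := π/6) (fun x => log (sin x)) (π/2)
    simp only [sin_pi_div_two_sub] at this
    rw [this]
    congr 1 <;> ring
  have hc : IntervalIntegrable (fun u => log (cos u)) MeasureTheory.volume 0 (π/6) := by
    apply ContinuousOn.intervalIntegrable
    intro x hx
    rw [Set.uIcc_of_le (by positivity)] at hx
    have : 0 < cos x := cos_pos_of_mem_Ioo ⟨by linarith [hx.1, pi_pos], by linarith [hx.2, pi_pos]⟩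
    exact ((continuous_cos.continuousAt).log this.ne').continuousWithinAt
  have h3 : ∫ x in (0:ℝ)..(π/6), log (sin (2 * x)) =
      ∫ x in (0:ℝ)..(π/6), ((log 2 + log (sin x)) + log (cos x)) := by
    apply intervalIntegral.integral_congr_ae
    refine Filter.Eventually.of_forall fun x hx => ?_
    rw [Set.uIoc_of_le (by positivity)] at hx
    have : 0 < cos x := cos_pos_of_mem_Ioo ⟨by linarith [hx.1, pi_pos], by linarith [hx.2, pi_pos]⟩
    have h' : 0 < sin x := sin_pos_of_pos_of_lt_pi hx.1 (by linarith [hx.2, pi_pos])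
    rw [sin_two_mul, log_mul (by positivity) (by positivity), log_mul (by positivity) (by positivity)]
  rw [intervalIntegral.integral_add ((intervalIntegrable_const).add (ii_log_sin _ _)) hc,
    intervalIntegral.integral_add (intervalIntegrable_const) (ii_log_sin _ _), h1, h2] at h3
  simp only [intervalIntegral.integral_const, smul_eq_mul] at h3
  rw [← II] at h3
  linarith

lemma xlog_cont : ContinuousOn (fun x : ℝ => x * log (sin x)) (Set.Icc 0 (π/6)) := by
  have hs : ∀ x ∈ Set.Icc 0 (π/6), sinc x ≠ 0 := by
    intro x hx
    rcases hx.1.eq_or_lt with rfl | h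
    · simp
    · rw [sinc_of_ne_zero h.ne']
      have h' : 0 < sin x := sin_pos_of_pos_of_lt_pi h (by linarith [hx.2, pi_pos])
      positivity
  have h : ContinuousOn (fun x : ℝ => (sin x * log (sin x)) / sinc x) (Set.Icc 0 (π/6)) :=
    ContinuousOn.div (continuous_mul_log.comp continuous_sin).continuousOn
      continuous_sinc.continuousOn hs
  refine h.congr fun x hx => ?_
  have := hs x hx
  rcases hx.1.eq_or_lt with rfl | h
  · simp
  · simp only [sinc_of_ne_zero h.ne']
    have h' : 0 < sin x := sin_pos_of_pos_of_lt_pi h (by linarith [hx.2, pi_pos])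
    field_simp

lemma summable_sq : Summable (fun n : ℕ => 1 / ((n : ℝ) + 1) ^ 2) := by
  have := (summable_nat_add_iff 1).2 (Real.summable_one_div_nat_pow.2 (one_lt_two))
  simpa using this

lemma stepA : ∑' n : ℕ, aa n / (2 * n + 1) * (1/2 : ℝ) ^ (2 * n + 1) / (2 * n + 1)
    = - (π/6) * log 2 - II (π/6) := by
  have hp := pi_pos
  have := const_of_deriv (fun x => (∑' n : ℕ, aa n / (2 * n + 1) * (sin x) ^ (2 * n + 1) / (2 * n + 1))
    - (x * log (sin x) - II x)) (a := 0) (b := π/6) (by positivity) ?_ ?_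
  · simp [II_zero] at this
    simp
    linarith
  · refine ContinuousOn.sub ?_ (xlog_cont.sub II_cont.continuousOn)
    refine continuousOn_tsum (u := fun n : ℕ => 1 / ((n : ℝ) + 1) ^ 2) ?_ summable_sq ?_
    · intro n; fun_prop
    · intro n x _
      have h1 := aa_bound n
      have h2 : |sin x| ^ (2 * n + 1) ≤ 1 := pow_le_one₀ (abs_nonneg _) (abs_sin_le_one x)
      have h3 : (0:ℝ) < 2 * n + 1 := by positivity
      rw [Real.norm_eq_abs, abs_div, abs_mul, abs_pow, abs_div, abs_of_nonneg h1.1, abs_of_pos h3]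
      calc _ = aa n * |sin x| ^ (2 * n + 1) / (2 * n + 1) ^ 2 := by field_simp
        _ ≤ 1 / ((n:ℝ) + 1) ^ 2 := by
          gcongr
          · exact mul_le_one₀ h1.2 (by positivity) h2
          · linarith
  · intro x hx
    have hc : 0 < cos x := cos_pos_of_mem_Ioo ⟨by linarith [hx.1, pi_pos], by linarith [hx.2, pi_pos]⟩
    have h' : 0 < sin x := sin_pos_of_pos_of_lt_pi hx.1 (by linarith [hx.2, pi_pos])
    have hs : |sin x| < 1 := by
      rw [← sq_lt_one_iff_abs_lt_one]
      nlinarith [sin_sq_add_cos_sq x]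
    have h := ((series_deriv (fun n => aa n / (2 * n + 1)) (fun n => 2 * n) (fun n => by
      have := aa_bound n
      rw [abs_div, abs_of_nonneg this.1, abs_of_nonneg (by positivity), div_le_one (by positivity)]
      linarith [(Nat.cast_nonneg n : (0:ℝ) ≤ n)]) 
      (fun n => by show n ≤ 2 * n; omega) hs).comp x (hasDerivAt_sin x)).sub
      (((hasDerivAt_id x).mul ((hasDerivAt_sin x).log h'.ne')).sub (II_deriv hx.1 (by linarith [hx.2])))
    have e : ∑' n : ℕ, aa n / (2 * n + 1) * (sin x) ^ (2 * n) = x / sin x := by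
      rw [eq_div_iff h'.ne', ← tsum_mul_right]
      have h9 := arcsin_series hx.1.le (by linarith [hx.2])
      conv_rhs => rw [← h9]
      exact tsum_congr fun n => by ring
    rw [e] at h
    convert! h using 1
    · ext z; simp
    · simp; ring

noncomputable def om : ℂ := ⟨-1/2, √3/2⟩

lemma om_norm : ‖om‖ = 1 := by
  rw [Complex.norm_def, Complex.normSq_apply, sqrt_eq_one]
  have : √3 * √3 = 3 := mul_self_sqrt (by norm_num)
  simp only [om]
  linarith

lemma om_sq : om ^ 2 = ⟨-1/2, -√3/2⟩ := by
  have : √3 * √3 = 3 := mul_self_sqrt (by norm_num)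
  apply Complex.ext
  · simp [om, pow_two]; linarith
  · simp [om, pow_two]; ring

lemma om_cube : om ^ 3 = 1 := by
  have : √3 * √3 = 3 := mul_self_sqrt (by norm_num)
  rw [pow_succ, om_sq]
  apply Complex.ext
  · simp [om]; linarith
  · simp [om]; ring

noncomputable def cc (n : ℕ) : ℝ := (om ^ n).im

lemma cc_bound (n : ℕ) : |cc n| ≤ 1 := by
  refine (Complex.abs_im_le_norm _).trans ?_
  simp [om_norm]

lemma sin_pi3_sub (x : ℝ) : sin (π/3 - x) = √3 / 2 * cos x - 1 / 2 * sin x := by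
  rw [sin_sub, sin_pi_div_three, cos_pi_div_three]

lemma log_series {x : ℝ} (hx0 : 0 < x) (hx : x < π / 6) :
    0 < sin x / sin (π/3 - x) ∧ sin x / sin (π/3 - x) < 1 ∧
    ∑' n : ℕ, cc (n+1) / (n+1) * (sin x / sin (π/3 - x)) ^ n = x / (sin x / sin (π/3 - x)) := by
  have hp := pi_pos
  have h1 : 0 < sin x := sin_pos_of_pos_of_lt_pi hx0 (by linarith)
  have h2 : 0 < sin (π/3 - x) := sin_pos_of_pos_of_lt_pi (by linarith) (by linarith)
  have h3 : sin x < sin (π/3 - x) := sin_lt_sin_of_lt_of_le_pi_div_two (by linarith) (by linarith) (by linarith)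
  set t := sin x / sin (π/3 - x) with ht
  have t0 : 0 < t := by positivity
  have t1 : t < 1 := by rwa [ht, div_lt_one h2]
  refine ⟨t0, t1, ?_⟩
  have hn : ‖(t : ℂ) * om‖ < 1 := by
    rw [norm_mul, om_norm, mul_one, Complex.norm_real, Real.norm_eq_abs, abs_of_pos t0]; exact t1
  have hs := Complex.hasSum_im (Complex.hasSum_taylorSeries_neg_log hn)
  have harg : (Complex.log (1 - t * om)).im = -x := by
    rw [Complex.log_im]
    have : (1 - t * om) = ((√3 / 2 / sin (π/3 - x) : ℝ) : ℂ) * (Complex.cos ((-x : ℝ) : ℂ) + Complex.sin ((-x : ℝ):ℂ) * Complex.I) := by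
      rw [← Complex.ofReal_cos, ← Complex.ofReal_sin]
      apply Complex.ext
      · simp [om, -Complex.ofReal_cos, -Complex.ofReal_sin, -Complex.ofReal_div]
        rw [ht]
        have h5 := sin_pi3_sub x
        generalize sin (π/3 - x) = q at *
        field_simp
        linarith
      · simp [om, -Complex.ofReal_cos, -Complex.ofReal_sin, -Complex.ofReal_div]
        rw [ht]
        field_simp
    rw [this, Complex.arg_mul_cos_add_sin_mul_I (by positivity) ⟨by linarith, by linarith⟩]
  rw [Complex.neg_im, harg, neg_neg] at hs
  rw [← hasSum_nat_add_iff' 1] at hs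
  simp only [Finset.sum_range_one, pow_zero, Nat.cast_zero, div_zero, Complex.zero_im, sub_zero] at hs
  rw [eq_div_iff t0.ne', ← tsum_mul_right, ← hs.tsum_eq]
  refine tsum_congr fun n => ?_
  have : ((t:ℂ) * om) ^ (n+1) / ((n+1 : ℕ) : ℂ) = ((t ^ (n+1) / ((n+1:ℕ):ℝ) : ℝ) : ℂ) * om ^ (n+1) := by
    push_cast
    ring
  rw [this, Complex.re_ofReal_mul |> fun _ => Complex.im_ofReal_mul, cc]
  push_cast
  ring

lemma stepC : ∑' n : ℕ, cc (n+1) / (n+1) * (1:ℝ) ^ (n + 1) / (n + 1)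
    = II (π/3) - 2 * II (π/6) := by
  have hp := pi_pos
  have hcont : ContinuousOn (fun x => sin x / sin (π/3 - x)) (Set.Icc 0 (π/6)) := by
    refine ContinuousOn.div (by fun_prop) (by fun_prop) fun x hx => ?_
    exact (sin_pos_of_pos_of_lt_pi (by linarith [hx.2]) (by linarith [hx.1])).ne'
  have := const_of_deriv (fun x => (∑' n : ℕ, cc (n+1) / (n + 1) * (sin x / sin (π/3 - x)) ^ (n + 1) / (n + 1))
    - (x * log (sin x) - x * log (sin (π/3 - x)) - II x - II (π/3 - x))) (a := 0) (b := π/6) (by positivity) ?_ ?_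
  · have e : π/3 - π/6 = π/6 := by ring
    have e2 : sin (π/6) / sin (π/6) = 1 := by simp
    simp only [e, e2] at this
    simp [II_zero] at this
    simp
    linarith
  · refine ContinuousOn.sub ?_ (((xlog_cont.sub ?_).sub II_cont.continuousOn).sub (II_cont.comp (by fun_prop)).continuousOn)
    · refine continuousOn_tsum (u := fun n : ℕ => 1 / ((n : ℝ) + 1) ^ 2) ?_ summable_sq ?_
      · intro n; fun_prop
      · intro n x hx
        have g1 : 0 ≤ sin x := sin_nonneg_of_nonneg_of_le_pi hx.1 (by linarith [hx.2])
        have g2 : 0 < sin (π/3 - x) := sin_pos_of_pos_of_lt_pi (by linarith [hx.2]) (by linarith [hx.1])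
        have g3 : sin x ≤ sin (π/3 - x) := sin_le_sin_of_le_of_le_pi_div_two (by linarith [hx.1]) (by linarith [hx.1]) (by linarith [hx.2])
        have h1 := cc_bound (n+1)
        have h2 : (sin x / sin (π/3 - x)) ^ (n + 1) ≤ 1 := pow_le_one₀ (by positivity) (by rwa [div_le_one g2])
        have h3 : (0:ℝ) < n + 1 := by positivity
        rw [Real.norm_eq_abs, abs_div, abs_mul, abs_pow, abs_div (cc _), abs_of_nonneg (a := _ / _) (by positivity), abs_of_pos h3]
        calc _ = |cc (n+1)| * (sin x / sin (π/3 - x)) ^ (n + 1) / (n + 1) ^ 2 := by field_simp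
          _ ≤ 1 / ((n:ℝ) + 1) ^ 2 := by
            gcongr
            exact mul_le_one₀ h1 (by positivity) h2
    · refine ContinuousOn.mul continuousOn_id (ContinuousOn.log (by fun_prop) fun x hx => ?_)
      exact (sin_pos_of_pos_of_lt_pi (by linarith [hx.2]) (by linarith [hx.1])).ne'
  · intro x hx
    obtain ⟨t0, t1, e⟩ := log_series hx.1 hx.2
    have h' : 0 < sin x := sin_pos_of_pos_of_lt_pi hx.1 (by linarith [hx.2, pi_pos])
    have g2 : 0 < sin (π/3 - x) := sin_pos_of_pos_of_lt_pi (by linarith [hx.2]) (by linarith [hx.1])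
    have d0 : HasDerivAt (fun x => π/3 - x) (-1) x := by
      simpa using (hasDerivAt_id x).const_sub (π/3)
    have d1 := d0.sin
    have d2 := (hasDerivAt_sin x).div d1 g2.ne'
    have d3 := (II_deriv (x := π/3 - x) (by linarith [hx.2]) (by linarith [hx.1])).comp x d0
    have h := ((series_deriv (fun n => cc (n+1) / (n + 1)) (fun n => n) (fun n => by
      rw [abs_div, abs_of_nonneg (by positivity : (0:ℝ) ≤ n + 1), div_le_one (by positivity)]
      linarith [(Nat.cast_nonneg n : (0:ℝ) ≤ n), cc_bound (n+1)]) 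
      (fun n => le_rfl) (x := sin x / sin (π/3 - x)) (by rwa [abs_of_pos t0])).comp x d2).sub
      (((((hasDerivAt_id x).mul ((hasDerivAt_sin x).log h'.ne')).sub
        ((hasDerivAt_id x).mul (d1.log g2.ne'))).sub (II_deriv hx.1 (by linarith [hx.2]))).sub d3)
    rw [e] at h
    convert! h using 1
    simp only [id]
    clear h d3 d2 d1 d0 e t0 t1
    generalize sin (π/3 - x) = q at *
    generalize cos (π/3 - x) = r at *
    field_simp
    ring

lemma split3 (f : ℕ → ℝ) (hf : Summable f) : ∑' n, f n =
    ∑' k, f (3 * k) + ∑' k, f (3 * k + 1) + ∑' k, f (3 * k + 2) := by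
  rw [Nat.sumByResidueClasses hf 3]
  rw [show (∑ j : ZMod 3, ∑' m, f (j.val + 3 * m)) = ∑ j : Fin 3, ∑' m, f (j.val + 3 * m) from rfl]
  rw [Fin.sum_univ_three]
  simp [add_comm]

/-- `₃F₂(1/2, 1/2, 1/2; 3/2, 3/2; 1/4) = (1/(2√3))·ψ′(1/3) − π²/(3√3)`,
where `ψ′(1/3) = 9·∑_{k≥0} 1/(3k+1)²`. -/
theorem threeF_two_quarter :
    ∑' n : ℕ, (poch (1/2) n)^3 / ((poch (3/2) n)^2 * (n.factorial : ℝ)) * (1/4 : ℝ)^n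
      = (9 / (2 * Real.sqrt 3)) * (∑' k : ℕ, 1 / (3 * (k : ℝ) + 1)^2)
        - π^2 / (3 * Real.sqrt 3) := by
  have hC := stepC
  have hD := II_dup
  rw [tsum_congr term_eq, tsum_mul_left, stepA]
  have s0 : Summable (fun n : ℕ => 1 / (n:ℝ)^2) := Real.summable_one_div_nat_pow.2 one_lt_two
  have s1 : Summable (fun n : ℕ => cc n / (n:ℝ)^2) := by
    refine Summable.of_norm_bounded s0 fun n => ?_
    rw [norm_div, Real.norm_eq_abs, norm_pow, Real.norm_natCast]
    gcongr
    exact cc_bound n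
  have e1 : ∑' n : ℕ, cc (n+1) / (n+1) * (1:ℝ) ^ (n + 1) / (n + 1) = ∑' n : ℕ, cc n / (n:ℝ)^2 := by
    rw [s1.tsum_eq_zero_add]
    simp only [Nat.cast_zero, ne_eq, OfNat.ofNat_ne_zero, not_false_eq_true, zero_pow, div_zero, zero_add]
    refine tsum_congr fun n => ?_
    push_cast
    rw [one_pow]
    field_simp
  have c0 (k : ℕ) : cc (3 * k) = 0 := by simp [cc, pow_mul, om_cube]
  have c1 (k : ℕ) : cc (3 * k + 1) = √3 / 2 := by rw [cc, pow_add, pow_mul, om_cube]; simp [om]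
  have c2 (k : ℕ) : cc (3 * k + 2) = -√3 / 2 := by simp [cc, pow_add, pow_mul, om_cube, om_sq]
  have z := hasSum_zeta_two.tsum_eq
  rw [split3 _ s0] at z
  rw [e1, split3 _ s1] at hC
  simp only [c0, c1, c2, zero_div, tsum_zero, zero_add] at hC
  have f1 : ∑' k : ℕ, √3 / 2 / ((3 * k + 1 : ℕ) : ℝ)^2 = √3 / 2 * ∑' k : ℕ, 1 / ((3 * k + 1 : ℕ) : ℝ)^2 := by
    rw [← tsum_mul_left]; exact tsum_congr fun k => by ring
  have f2 : ∑' k : ℕ, -√3 / 2 / ((3 * k + 2 : ℕ) : ℝ)^2 = -√3 / 2 * ∑' k : ℕ, 1 / ((3 * k + 2 : ℕ) : ℝ)^2 := by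
    rw [← tsum_mul_left]; exact tsum_congr fun k => by ring
  have f0 : ∑' k : ℕ, 1 / ((3 * k : ℕ) : ℝ)^2 = 1 / 9 * (π ^ 2 / 6) := by
    rw [← hasSum_zeta_two.tsum_eq, ← tsum_mul_left]
    exact tsum_congr fun k => by push_cast; rw [mul_pow, one_div_mul_one_div]; norm_num
  have fA : ∑' k : ℕ, 1 / ((3 * k + 1 : ℕ) : ℝ)^2 = ∑' k : ℕ, 1 / (3 * (k : ℝ) + 1)^2 := by
    push_cast; rfl
  rw [f1, f2, fA] at hC
  rw [f0, fA] at z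
  set A := ∑' k : ℕ, 1 / (3 * (k : ℝ) + 1)^2
  set B := ∑' k : ℕ, 1 / ((3 * k + 2 : ℕ) : ℝ)^2
  have hB : B = 4 * π ^ 2 / 27 - A := by linarith
  have hA : 2 * (-(π/6) * log 2 - II (π/6)) = 3 / 2 * (√3 / 2 * (A - B)) := by linarith
  rw [hA, hB]
  have h3 : √3 ^ 2 = 3 := sq_sqrt (by norm_num)
  have h3' : 0 < √3 := by positivity
  field_simp
  rw [h3]
  ring
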